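/- For every f ∈ 𝒮(ℝⁿ) (n ≥ 1), every j ∈ {1,…,n}, and every p ∈ ℝⁿ: X₀(q ↦ q_j f(q))(p) − p_j (X₀f)(p) = i · 𝓕( x ↦ (x_j/‖x‖)·(𝓕⁻¹f)(x) )(p), where the integrand on the right is extended by 0 at x = 0 and is integrable. That is, the commutator of the temporal coordinate operator X₀ with multiplication by the momentum component p_j equals i times the Fourier conjugate of multiplication by x_j/‖x‖ (the Fourier-transformed velocity operator arising in the first-order translation covariance of X₀). -/

import Mathlib

open MeasureTheory Real Filter
open scoped RealInnerProductSpace SchwartzMap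

noncomputable section

/-- ℝⁿ as a Euclidean space. -/
abbrev Eu (n : ℕ) := EuclideanSpace ℝ (Fin n)

/-- The Fourier transform (𝓕ψ)(p) = (2π)^{-n/2} ∫ e^{-i⟨p,x⟩} ψ(x) dx. -/
def FT {n : ℕ} (ψ : Eu n → ℂ) (p : Eu n) : ℂ :=
  (Real.sqrt ((2 * Real.pi) ^ n))⁻¹ • ∫ x, Complex.exp (-Complex.I * (⟪p, x⟫ : ℝ)) * ψ x

/-- The inverse Fourier transform (𝓕⁻¹ψ)(x) = (2π)^{-n/2} ∫ e^{i⟨x,p⟩} ψ(p) dp. -/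
def FTinv {n : ℕ} (ψ : Eu n → ℂ) (x : Eu n) : ℂ :=
  (Real.sqrt ((2 * Real.pi) ^ n))⁻¹ • ∫ p, Complex.exp (Complex.I * (⟪x, p⟫ : ℝ)) * ψ p

/-- The one-particle temporal coordinate operator X₀f = 𝓕(x ↦ ‖x‖·(𝓕⁻¹f)(x)). -/
def X0 {n : ℕ} (f : Eu n → ℂ) : Eu n → ℂ :=
  FT (fun x => (‖x‖ : ℂ) * FTinv f x)

/-! Put `ψ = FTinv f` and let `v` be a direction. Multiplying `f` by `⟪·, v⟫` turns `ψ` into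
`-i ∂ᵥψ`, so the commutator of `X0` with this multiplication is `FT` applied to `-i` times the
commutator of multiplication by `‖x‖` with `∂ᵥ`, which is multiplication by
`-∂ᵥ‖x‖ = -⟪x, v⟫ / ‖x‖`. Since the norm is not differentiable at the origin, the underlying
integration by parts is carried out for `√(‖x‖ ^ 2 + ε)` and passed to the limit `ε → 0⁺` by
dominated convergence. -/

theorem tendsto_sqrt_sq_add_nhdsGT {a : ℝ} (ha : 0 ≤ a) :
    Tendsto (fun ε => √(a ^ 2 + ε)) (nhdsWithin 0 (Set.Ioi 0)) (nhds a) := by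
  have hc : Continuous fun ε => √(a ^ 2 + ε) := by fun_prop
  simpa [Real.sqrt_sq ha] using (hc.tendsto 0).mono_left nhdsWithin_le_nhds

section NormWeight

variable {E F : Type*} [NormedAddCommGroup E] [NormedAddCommGroup F] [NormedSpace ℝ F] {ε : ℝ}

theorem norm_sqrt_norm_sq_add_smul_le (hε : ε ≤ 1) (x : E) (y : F) :
    ‖√(‖x‖ ^ 2 + ε) • y‖ ≤ ‖‖x‖ • y‖ + ‖y‖ := by
  have hle : √(‖x‖ ^ 2 + ε) ≤ ‖x‖ + 1 :=
    Real.sqrt_le_iff.2 ⟨by positivity, by nlinarith [norm_nonneg x]⟩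
  rw [norm_smul, norm_smul, norm_norm, Real.norm_of_nonneg (Real.sqrt_nonneg _), ← add_one_mul]
  gcongr

variable [MeasurableSpace E] [OpensMeasurableSpace E] {μ : Measure E} {h : E → F}

theorem integrable_sqrt_norm_sq_add_smul (hε : ε ≤ 1) (hi : Integrable h μ)
    (hn : Integrable (fun x => ‖x‖ • h x) μ) :
    Integrable (fun x => √(‖x‖ ^ 2 + ε) • h x) μ :=
  (hn.norm.add hi.norm).mono' ((Continuous.aestronglyMeasurable (by fun_prop)).smul hi.1)
    (ae_of_all _ fun x => norm_sqrt_norm_sq_add_smul_le hε x (h x))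

theorem tendsto_integral_sqrt_norm_sq_add_smul (hi : Integrable h μ)
    (hn : Integrable (fun x => ‖x‖ • h x) μ) :
    Tendsto (fun ε => ∫ x, √(‖x‖ ^ 2 + ε) • h x ∂μ) (nhdsWithin 0 (Set.Ioi 0))
      (nhds (∫ x, ‖x‖ • h x ∂μ)) := by
  refine tendsto_integral_filter_of_dominated_convergence (fun x => ‖‖x‖ • h x‖ + ‖h x‖)
    (.of_forall fun ε => (Continuous.aestronglyMeasurable (by fun_prop)).smul hi.1) ?_
    (hn.norm.add hi.norm)
    (ae_of_all _ fun x => (tendsto_sqrt_sq_add_nhdsGT (norm_nonneg x)).smul_const (h x))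
  filter_upwards [Ioc_mem_nhdsGT one_pos] with ε hε
  exact ae_of_all _ fun x => norm_sqrt_norm_sq_add_smul_le hε.2 x (h x)

theorem integrable_of_integrable_norm_smul [ProperSpace E]
    (hl : LocallyIntegrable h μ) (hn : Integrable (fun x => ‖x‖ • h x) μ) : Integrable h μ := by
  refine hl.integrable_of_isBigO_cocompact (.of_bound 1 ?_) (hn.integrableAtFilter _)
  filter_upwards [(tendsto_norm_cocompact_atTop (E := E)).eventually_ge_atTop 1] with x hx
  rw [one_mul, norm_smul, norm_norm]
  exact le_mul_of_one_le_left (norm_nonneg _) hx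

end NormWeight

section NormLineDeriv

variable {E F : Type*} [NormedAddCommGroup E] [InnerProductSpace ℝ E] [NormedAddCommGroup F]
  [NormedSpace ℝ F] {ε : ℝ}

theorem hasLineDerivAt_sqrt_norm_sq_add (hε : 0 < ε) (x v : E) :
    HasLineDerivAt ℝ (fun y : E => √(‖y‖ ^ 2 + ε)) (⟪x, v⟫ / √(‖x‖ ^ 2 + ε)) x v := by
  have h := ((hasStrictFDerivAt_norm_sq x).hasFDerivAt.add_const ε).sqrt
    (by positivity : ‖x‖ ^ 2 + ε ≠ 0)
  convert! h.hasLineDerivAt v using 1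
  simp only [two_nsmul, FunLike.coe_smul, Pi.smul_apply, add_apply,
    innerSL_apply_apply, smul_eq_mul]
  field_simp
  ring

theorem norm_inner_div_sqrt_smul_le (hε : 0 ≤ ε) (x v : E) (y : F) :
    ‖(⟪x, v⟫ / √(‖x‖ ^ 2 + ε)) • y‖ ≤ ‖v‖ * ‖y‖ := by
  have hle : ‖x‖ ≤ √(‖x‖ ^ 2 + ε) := Real.le_sqrt_of_sq_le (by linarith)
  rw [norm_smul, norm_div, Real.norm_of_nonneg (Real.sqrt_nonneg _)]
  gcongr
  refine div_le_of_le_mul₀ (Real.sqrt_nonneg _) (norm_nonneg v) ?_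
  calc ‖⟪x, v⟫‖ ≤ ‖x‖ * ‖v‖ := norm_inner_le_norm x v
    _ ≤ ‖v‖ * √(‖x‖ ^ 2 + ε) := by rw [mul_comm]; gcongr

variable [MeasurableSpace E] [OpensMeasurableSpace E]

theorem measurable_inner_div_sqrt_norm_sq_add (ε : ℝ) (v : E) :
    Measurable fun x : E => ⟪x, v⟫ / √(‖x‖ ^ 2 + ε) :=
  (Continuous.measurable (by fun_prop)).div (Continuous.measurable (by fun_prop))

variable {μ : Measure E} {h : E → F}

theorem integrable_inner_div_sqrt_smul (hε : 0 ≤ ε) (v : E) (hi : Integrable h μ) :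
    Integrable (fun x => (⟪x, v⟫ / √(‖x‖ ^ 2 + ε)) • h x) μ :=
  (hi.norm.const_mul ‖v‖).mono'
    ((measurable_inner_div_sqrt_norm_sq_add ε v).aestronglyMeasurable.smul hi.1)
    (ae_of_all _ fun x => norm_inner_div_sqrt_smul_le hε x v (h x))

theorem integrable_inner_div_norm_smul (v : E) (hi : Integrable h μ) :
    Integrable (fun x => (⟪x, v⟫ / ‖x‖) • h x) μ := by
  simpa using integrable_inner_div_sqrt_smul le_rfl v hi

theorem tendsto_integral_inner_div_sqrt_smul (v : E) (hi : Integrable h μ) :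
    Tendsto (fun ε => ∫ x, (⟪x, v⟫ / √(‖x‖ ^ 2 + ε)) • h x ∂μ) (nhdsWithin 0 (Set.Ioi 0))
      (nhds (∫ x, (⟪x, v⟫ / ‖x‖) • h x ∂μ)) := by
  refine tendsto_integral_filter_of_dominated_convergence (fun x => ‖v‖ * ‖h x‖)
    (.of_forall fun ε =>
      (measurable_inner_div_sqrt_norm_sq_add ε v).aestronglyMeasurable.smul hi.1) ?_
    (hi.norm.const_mul ‖v‖) (ae_of_all _ fun x => ?_)
  · filter_upwards [self_mem_nhdsWithin] with ε hε
    exact ae_of_all _ fun x => norm_inner_div_sqrt_smul_le (le_of_lt hε) x v (h x)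
  · rcases eq_or_ne x 0 with rfl | hx
    · simp
    · exact (tendsto_const_nhds.div (tendsto_sqrt_sq_add_nhdsGT (norm_nonneg x))
        (norm_ne_zero_iff.2 hx)).smul_const (h x)

end NormLineDeriv

theorem integral_norm_smul_eq_neg_of_hasLineDerivAt {E F : Type*} [NormedAddCommGroup E]
    [InnerProductSpace ℝ E] [FiniteDimensional ℝ E] [MeasurableSpace E] [BorelSpace E]
    [NormedAddCommGroup F] [NormedSpace ℝ F] {μ : Measure E} [μ.IsAddHaarMeasure]
    {h h' : E → F} {v : E} (hd : ∀ x, HasLineDerivAt ℝ h (h' x) x v) (hi : Integrable h μ)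
    (hn : Integrable (fun x => ‖x‖ • h x) μ) (hi' : Integrable h' μ)
    (hn' : Integrable (fun x => ‖x‖ • h' x) μ) :
    ∫ x, ‖x‖ • h' x ∂μ = -∫ x, (⟪x, v⟫ / ‖x‖) • h x ∂μ := by
  refine tendsto_nhds_unique (tendsto_integral_sqrt_norm_sq_add_smul hi' hn')
    ((tendsto_integral_inner_div_sqrt_smul v hi).neg.congr' ?_)
  filter_upwards [Ioc_mem_nhdsGT one_pos] with ε ⟨hε, hε1⟩
  exact (integral_bilinear_hasLineDerivAt_right_eq_neg_left_of_integrable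
    (B := ContinuousLinearMap.lsmul ℝ ℝ) (integrable_inner_div_sqrt_smul hε.le v hi)
    (integrable_sqrt_norm_sq_add_smul hε1 hi' hn') (integrable_sqrt_norm_sq_add_smul hε1 hi hn)
    (fun x _ => hasLineDerivAt_sqrt_norm_sq_add hε x v) fun x _ => hd x).symm

theorem hasDerivAt_cexp_mul_clm_line {E : Type*} [NormedAddCommGroup E] [NormedSpace ℝ E]
    (c : ℂ) (ℓ : E →L[ℝ] ℝ) (x v : E) (t : ℝ) :
    HasDerivAt (fun s : ℝ => Complex.exp (c * (ℓ (x + s • v) : ℝ)))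
      (c * (ℓ v : ℝ) * Complex.exp (c * (ℓ (x + t • v) : ℝ))) t := by
  have hline : HasDerivAt (fun s : ℝ => ℓ (x + s • v)) (ℓ v) t := by
    simpa using ((hasDerivAt_id t).mul_const (ℓ v)).const_add (ℓ x)
  simpa only [mul_comm] using (hline.ofReal_comp.const_mul c).cexp

section Fourier

variable {n : ℕ} {f ψ ψ' : Eu n → ℂ} {v : Eu n}

theorem FT_const_mul (c : ℂ) (ψ : Eu n → ℂ) (p : Eu n) :
    FT (fun x => c * ψ x) p = c * FT ψ p := by
  simp only [FT, mul_left_comm _ c, integral_const_mul, mul_smul_comm]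

theorem norm_cexp_I_mul_inner_mul (x p : Eu n) (z : ℂ) :
    ‖Complex.exp (Complex.I * (⟪x, p⟫ : ℝ)) * z‖ = ‖z‖ := by
  simp [Complex.norm_exp]

theorem integrable_cexp_neg_I_mul_inner_mul (hψ : Integrable ψ) (p : Eu n) :
    Integrable fun x => Complex.exp (-Complex.I * (⟪p, x⟫ : ℝ)) * ψ x :=
  hψ.bdd_mul (c := 1) (Continuous.aestronglyMeasurable (by fun_prop))
    (ae_of_all _ fun x => by simp [Complex.norm_exp])

theorem continuous_FTinv (hf : Integrable f) : Continuous (FTinv f) := by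
  have hc : Continuous fun x => ∫ q, Complex.exp (Complex.I * (⟪x, q⟫ : ℝ)) * f q :=
    continuous_of_dominated (bound := fun q => ‖f q‖)
      (fun x => (Continuous.aestronglyMeasurable (by fun_prop)).mul hf.1)
      (fun x => ae_of_all _ fun q => (norm_cexp_I_mul_inner_mul x q (f q)).le) hf.norm
      (ae_of_all _ fun q => by fun_prop)
  exact hc.const_smul (√((2 * π) ^ n))⁻¹

theorem hasLineDerivAt_FTinv (hf : Integrable f)
    (hvf : Integrable fun q => ((⟪q, v⟫ : ℝ) : ℂ) * f q) (x : Eu n) :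
    HasLineDerivAt ℝ (FTinv f)
      (Complex.I * FTinv (fun q => ((⟪q, v⟫ : ℝ) : ℂ) * f q) x) x v := by
  have hderiv (q : Eu n) (t : ℝ) :
      HasDerivAt (fun s : ℝ => Complex.exp (Complex.I * (⟪x + s • v, q⟫ : ℝ)) * f q)
        (Complex.I * (⟪v, q⟫ : ℝ) * Complex.exp (Complex.I * (⟪x + t • v, q⟫ : ℝ)) * f q) t :=
    (hasDerivAt_cexp_mul_clm_line Complex.I ((innerSL ℝ).flip q) x v t).mul_const (f q)
  have hbound (q : Eu n) (t : ℝ) :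
      ‖Complex.I * (⟪v, q⟫ : ℝ) * Complex.exp (Complex.I * (⟪x + t • v, q⟫ : ℝ)) * f q‖ ≤
        ‖((⟪q, v⟫ : ℝ) : ℂ) * f q‖ := by
    simp [Complex.norm_exp, real_inner_comm v q]
  have hd := (hasDerivAt_integral_of_dominated_loc_of_deriv_le (μ := volume) (x₀ := (0 : ℝ))
    (F := fun t q => Complex.exp (Complex.I * (⟪x + t • v, q⟫ : ℝ)) * f q)
    (F' := fun t q =>
      Complex.I * (⟪v, q⟫ : ℝ) * Complex.exp (Complex.I * (⟪x + t • v, q⟫ : ℝ)) * f q) univ_mem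
    (.of_forall fun t => (Continuous.aestronglyMeasurable (by fun_prop)).mul hf.1)
    (hf.norm.mono' ((Continuous.aestronglyMeasurable (by fun_prop)).mul hf.1)
      (ae_of_all _ fun q => (norm_cexp_I_mul_inner_mul _ q (f q)).le))
    ((Continuous.aestronglyMeasurable (by fun_prop)).mul hf.1)
    (ae_of_all _ fun q t _ => hbound q t) hvf.norm (ae_of_all _ fun q t _ => hderiv q t)).2
  refine (hd.const_smul (√((2 * π) ^ n))⁻¹).congr_deriv ?_
  rw [FTinv, mul_smul_comm, ← integral_const_mul]
  congr 2 with q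
  rw [zero_smul, add_zero, real_inner_comm v q]
  ring

theorem FT_norm_mul_of_hasLineDerivAt (hd : ∀ x, HasLineDerivAt ℝ ψ (ψ' x) x v)
    (hi : Integrable ψ) (hn : Integrable fun x => (‖x‖ : ℂ) * ψ x)
    (hi' : Integrable ψ') (hn' : Integrable fun x => (‖x‖ : ℂ) * ψ' x) (p : Eu n) :
    FT (fun x => (‖x‖ : ℂ) * ψ' x) p =
      Complex.I * (⟪p, v⟫ : ℝ) * FT (fun x => (‖x‖ : ℂ) * ψ x) p -
        FT (fun x => ((⟪x, v⟫ / ‖x‖ : ℝ) : ℂ) * ψ x) p := by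
  set e : Eu n → ℂ := fun x => Complex.exp (-Complex.I * (⟪p, x⟫ : ℝ)) with he
  set c : ℂ := Complex.I * (⟪p, v⟫ : ℝ) with hc
  have hde (x : Eu n) :
      HasLineDerivAt ℝ (fun y => e y * ψ y) (e x * ψ' x - c * (e x * ψ x)) x v := by
    refine ((hasDerivAt_cexp_mul_clm_line (-Complex.I) (innerSL ℝ p) x v 0).mul
      (hd x)).congr_deriv ?_
    simp only [he, hc, innerSL_apply_apply, zero_smul, add_zero]
    ring
  have hie := integrable_cexp_neg_I_mul_inner_mul hi p
  have hie' := integrable_cexp_neg_I_mul_inner_mul hi' p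
  have hne := integrable_cexp_neg_I_mul_inner_mul hn p
  have hne' := integrable_cexp_neg_I_mul_inner_mul hn' p
  have hsplit (x : Eu n) : ‖x‖ • (e x * ψ' x - c * (e x * ψ x)) =
      e x * (‖x‖ * ψ' x) - c * (e x * (‖x‖ * ψ x)) := by
    rw [Complex.real_smul]
    ring
  have hparts := integral_norm_smul_eq_neg_of_hasLineDerivAt hde hie
    (hne.congr (ae_of_all _ fun x => mul_left_comm _ _ _))
    (hie'.sub (hie.const_mul c))
    ((hne'.sub (hne.const_mul c)).congr (ae_of_all _ fun x => (hsplit x).symm))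
  simp only [hsplit] at hparts
  rw [integral_sub hne' (hne.const_mul c), integral_const_mul] at hparts
  simp only [Complex.real_smul, mul_left_comm _ (e _)] at hparts
  simp only [FT, Complex.real_smul]
  linear_combination ((√((2 * π) ^ n))⁻¹ : ℝ) * hparts

end Fourier

section Schwartz

variable {n : ℕ}

theorem FTinv_eq_fourierInv (ψ : Eu n → ℂ) (x : Eu n) :
    FTinv ψ x = (√((2 * π) ^ n))⁻¹ • FourierTransform.fourierInv ψ ((2 * π)⁻¹ • x) := by
  rw [FTinv, Real.fourierInv_eq']
  congr 2 with q
  rw [inner_smul_right, mul_inv_cancel_left₀ (by positivity), real_inner_comm, smul_eq_mul,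
    mul_comm Complex.I]

theorem integrable_norm_mul_FTinv_schwartz (f : 𝓢(Eu n, ℂ)) :
    Integrable fun x => (‖x‖ : ℂ) * FTinv f x := by
  have hg : Integrable fun y : Eu n => (‖y‖ : ℂ) * FourierTransform.fourierInv f y :=
    ((FourierTransform.fourierInv f).integrable_pow_mul volume 1).mono'
      (Continuous.aestronglyMeasurable (by fun_prop)) (ae_of_all _ fun y => by simp)
  refine ((hg.comp_smul (R := (2 * π)⁻¹) (by positivity)).const_mul
    ((2 * π * (√((2 * π) ^ n))⁻¹ : ℝ) : ℂ)).congr (ae_of_all _ fun x => ?_)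
  have hπ : (π : ℂ) ≠ 0 := Complex.ofReal_ne_zero.2 pi_ne_zero
  simp only [FTinv_eq_fourierInv, SchwartzMap.fourierInv_coe, norm_smul, Complex.real_smul,
    Real.norm_of_nonneg (inv_nonneg.2 two_pi_pos.le)]
  push_cast
  field_simp

theorem exists_schwartz_eq_inner_mul (f : 𝓢(Eu n, ℂ)) (v : Eu n) :
    ∃ g : 𝓢(Eu n, ℂ), ⇑g = fun q => ((⟪q, v⟫ : ℝ) : ℂ) * f q :=
  ⟨SchwartzMap.smulLeftCLM ℂ (fun q => ⟪q, v⟫) f, by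
    simp [SchwartzMap.smulLeftCLM_apply (g := fun q : Eu n => ⟪q, v⟫) (by fun_prop)]⟩

end Schwartz

theorem inner_single_one_right {ι : Type*} [Fintype ι] [DecidableEq ι]
    (x : EuclideanSpace ℝ ι) (j : ι) : ⟪x, EuclideanSpace.single j 1⟫ = x j := by
  rw [EuclideanSpace.inner_single_right, conj_trivial, one_mul]

theorem stmt3_general {n : ℕ} {f : Eu n → ℂ} {v : Eu n} (hf : Integrable f)
    (hvf : Integrable fun q => ((⟪q, v⟫ : ℝ) : ℂ) * f q)
    (hn : Integrable fun x => (‖x‖ : ℂ) * FTinv f x)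
    (hvn : Integrable fun x => (‖x‖ : ℂ) * FTinv (fun q => ((⟪q, v⟫ : ℝ) : ℂ) * f q) x)
    (p : Eu n) :
    Integrable (fun x => ((⟪x, v⟫ / ‖x‖ : ℝ) : ℂ) * FTinv f x) ∧
      X0 (fun q => ((⟪q, v⟫ : ℝ) : ℂ) * f q) p - ((⟪p, v⟫ : ℝ) : ℂ) * X0 f p =
        Complex.I * FT (fun x => ((⟪x, v⟫ / ‖x‖ : ℝ) : ℂ) * FTinv f x) p := by
  have hi : Integrable (FTinv f) :=
    integrable_of_integrable_norm_smul (continuous_FTinv hf).locallyIntegrable hn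
  have hvi : Integrable (FTinv fun q => ((⟪q, v⟫ : ℝ) : ℂ) * f q) :=
    integrable_of_integrable_norm_smul (continuous_FTinv hvf).locallyIntegrable hvn
  refine ⟨integrable_inner_div_norm_smul v hi, ?_⟩
  have hFT := FT_norm_mul_of_hasLineDerivAt (hasLineDerivAt_FTinv hf hvf) hi hn
    (hvi.const_mul Complex.I)
    ((hvn.const_mul Complex.I).congr (ae_of_all _ fun x => mul_left_comm _ _ _)) p
  simp only [mul_left_comm _ Complex.I, FT_const_mul] at hFT
  simp only [X0]
  linear_combination (-Complex.I) * hFT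
    + (FT (fun x => (‖x‖ : ℂ) * FTinv (fun q => ((⟪q, v⟫ : ℝ) : ℂ) * f q) x) p
      - (⟪p, v⟫ : ℝ) * FT (fun x => (‖x‖ : ℂ) * FTinv f x) p) * Complex.I_sq

/-- The commutator of the temporal coordinate operator X₀ with multiplication by the
momentum component p_j equals i times the Fourier conjugate of multiplication by
x_j/‖x‖ (extended by 0 at x = 0, and integrable):
X₀(q ↦ q_j f(q))(p) − p_j (X₀f)(p) = i·𝓕(x ↦ (x_j/‖x‖)(𝓕⁻¹f)(x))(p). -/
theorem stmt3 {n : ℕ} (hn : 1 ≤ n) (f : 𝓢(Eu n, ℂ)) (j : Fin n) (p : Eu n) :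
    Integrable (fun x : Eu n => ((x j / ‖x‖ : ℝ) : ℂ) * FTinv (f : Eu n → ℂ) x) ∧
      X0 (fun q => (q j : ℂ) * f q) p - (p j : ℂ) * X0 (f : Eu n → ℂ) p
        = Complex.I * FT (fun x => ((x j / ‖x‖ : ℝ) : ℂ) * FTinv (f : Eu n → ℂ) x) p := by
  obtain ⟨g, hg⟩ := exists_schwartz_eq_inner_mul f (EuclideanSpace.single j 1)
  simpa only [inner_single_one_right] using
    stmt3_general (v := EuclideanSpace.single j 1) f.integrable (hg ▸ g.integrable)
      (integrable_norm_mul_FTinv_schwartz f) (hg ▸ integrable_norm_mul_FTinv_schwartz g) p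

end
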